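/- Let η be a probability measure on ℝ^d with finite absolute first moment M_1(η) = ∫‖x‖ dη(x). For θ ∈ ℝ^d, let η_θ denote the pushforward of η under the map x ↦ ⟨θ, x⟩. Then for any θ_1, θ_2 ∈ ℝ^d, W_1(η_{θ_1}, η_{θ_2}) ≤ ‖θ_1 − θ_2‖ · M_1(η). -/

import Mathlib

open MeasureTheory

/-- The 1-Wasserstein distance between measures on `ℝ`, in dual form. -/
noncomputable def W1 (μ ν : Measure ℝ) : ℝ :=
  ⨆ f : {f : ℝ → ℝ // LipschitzWith 1 f},
    |∫ x, (f : ℝ → ℝ) x ∂μ - ∫ x, (f : ℝ → ℝ) x ∂ν|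

/-- Lipschitz continuity of projections: for a probability measure `η` on `ℝ^d`
with finite first moment, `W₁(η_{θ₁}, η_{θ₂}) ≤ ‖θ₁ − θ₂‖ · M₁(η)`. -/
theorem projection_lipschitz
    {d : ℕ} (η : Measure (EuclideanSpace ℝ (Fin d))) [IsProbabilityMeasure η]
    (hM1 : Integrable (fun x => ‖x‖) η)
    (θ₁ θ₂ : EuclideanSpace ℝ (Fin d)) :
    W1 (η.map (fun x => (inner ℝ θ₁ x : ℝ))) (η.map (fun x => (inner ℝ θ₂ x : ℝ))) ≤
      ‖θ₁ - θ₂‖ * ∫ x, ‖x‖ ∂η := by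
  have key : ∀ (f : ℝ → ℝ), LipschitzWith 1 f → ∀ θ : EuclideanSpace ℝ (Fin d),
      Integrable (fun x => f (inner ℝ θ x : ℝ)) η := by
    intro f hf θ
    have hg : Integrable (fun x : EuclideanSpace ℝ (Fin d) => |f 0| + ‖θ‖ * ‖x‖) η :=
      (integrable_const _).add (hM1.const_mul _)
    refine hg.mono' ?_ (Filter.Eventually.of_forall fun x => ?_)
    · have hc : Continuous (fun x : EuclideanSpace ℝ (Fin d) => f (inner ℝ θ x : ℝ)) :=
        hf.continuous.comp (by fun_prop)
      exact hc.aestronglyMeasurable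
    · have h1 := hf.dist_le_mul (inner ℝ θ x : ℝ) 0
      have h2 := abs_real_inner_le_norm θ x
      simp only [Real.dist_eq, NNReal.coe_one, one_mul, sub_zero] at h1
      have h3 := abs_sub_abs_le_abs_sub (f (inner ℝ θ x : ℝ)) (f 0)
      rw [Real.norm_eq_abs]
      linarith
  unfold W1
  refine Real.iSup_le ?_ (mul_nonneg (norm_nonneg _) (integral_nonneg fun x => norm_nonneg _))
  rintro ⟨f, hf⟩
  have hm : ∀ θ : EuclideanSpace ℝ (Fin d),
      ∫ y, f y ∂(η.map (fun x => (inner ℝ θ x : ℝ))) = ∫ x, f (inner ℝ θ x : ℝ) ∂η := by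
    intro θ
    have hc : Continuous (fun x : EuclideanSpace ℝ (Fin d) => (inner ℝ θ x : ℝ)) := by fun_prop
    exact integral_map hc.measurable.aemeasurable hf.continuous.aestronglyMeasurable
  simp only [hm]
  rw [← integral_sub (key f hf θ₁) (key f hf θ₂), ← integral_const_mul, ← Real.norm_eq_abs]
  refine norm_integral_le_of_norm_le (hM1.const_mul _) (Filter.Eventually.of_forall fun x => ?_)
  have h1 := hf.dist_le_mul (inner ℝ θ₁ x : ℝ) (inner ℝ θ₂ x : ℝ)
  simp only [Real.dist_eq, NNReal.coe_one, one_mul] at h1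
  rw [← inner_sub_left] at h1
  rw [Real.norm_eq_abs]
  exact h1.trans (abs_real_inner_le_norm _ _)
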